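/- arXiv:2405.14387 — 2 statements merged into one kernel-verified Lean document; each statement's English description precedes it below -/
import Mathlib

section
/- Let δ > 0 and let G be a group acting by isometries on a δ-hyperbolic geodesic metric space X. Let U ⊆ G be a finite symmetric subset and let g ∈ G be a loxodromic element. Then for every integer n ≥ 1, the set U^n ∩ ⟨g⟩ is finite and |U^n ∩ ⟨g⟩| ≤ 2n·L(U)/‖g‖^∞ + 1, where ⟨g⟩ is the cyclic subgroup generated by g. -/
/-!
If `w = g ^ k` lies in `U ^ n`, the triangle inequality gives `d(w y, y) ≤ n L(U, y)` for every
point `y` (`dist_smul_le_of_mem_pow`), while subadditivity gives `|k| ‖g‖^∞ ≤ d(g ^ k y, y)`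
(`natAbs_mul_stableLength_le`). Taking the infimum over `y`, the exponents `k` that occur satisfy
`|k| ≤ r` with `r = n L(U) / ‖g‖^∞`, and there are at most `2 ⌊r⌋ + 1` such integers.
-/

open Pointwise Filter

noncomputable section

universe u v

/-- The Gromov product `(x,y)_t`. -/
def gromov {X : Type*} [MetricSpace X] (x y t : X) : ℝ :=
  (dist x t + dist y t - dist x y) / 2

/-- `X` is `δ`-hyperbolic (four point inequality). -/
def IsDeltaHyperbolic (X : Type*) [MetricSpace X] (δ : ℝ) : Prop :=
  ∀ x y z t : X, min (gromov x y t) (gromov y z t) - δ ≤ gromov x z t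

/-- `X` is a geodesic metric space: any two points are joined by an isometric
embedding of a closed real interval. -/
def IsGeodesicSpace (X : Type*) [MetricSpace X] : Prop :=
  ∀ x y : X, ∃ f : ℝ → X, f 0 = x ∧ f (dist x y) = y ∧
    ∀ s ∈ Set.Icc (0 : ℝ) (dist x y), ∀ t ∈ Set.Icc (0 : ℝ) (dist x y),
      dist (f s) (f t) = |s - t|

/-- The action of `G` on `X` is by isometries. -/
def IsometricAction (G X : Type*) [Group G] [MetricSpace X] [MulAction G X] : Prop :=
  ∀ g : G, Isometry fun x : X => g • x

/-- The action of `G` on `X` is `(κ,N)`-acylindrical (relative to the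
hyperbolicity constant `δ`). -/
def AcylindricalAction (G X : Type*) [Group G] [MetricSpace X] [MulAction G X]
    (δ κ N : ℝ) : Prop :=
  ∀ x y : X, κ ≤ dist x y →
    {g : G | dist (g • x) x ≤ 100 * δ ∧ dist (g • y) y ≤ 100 * δ}.Finite ∧
    ({g : G | dist (g • x) x ≤ 100 * δ ∧ dist (g • y) y ≤ 100 * δ}.ncard : ℝ) ≤ N

/-- `L(U,x)`, the `ℓ^∞`-energy of `U` at `x`. -/
def energyAt {G X : Type*} [Group G] [MetricSpace X] [MulAction G X]
    (U : Set G) (x : X) : ℝ :=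
  sSup ((fun u : G => dist (u • x) x) '' U)

/-- `L(U)`, the `ℓ^∞`-energy of `U`. -/
def energy {G : Type*} (X : Type*) [Group G] [MetricSpace X] [MulAction G X]
    (U : Set G) : ℝ :=
  sInf (Set.range fun x : X => energyAt U x)

/-- The stable translation length `‖g‖^∞`, computed at the point `x` (for an
isometric action, by Fekete's subadditive lemma this infimum equals the limit of
`d(gⁿx,x)/n` and is independent of `x`). -/
def stableLength {G X : Type*} [Group G] [MetricSpace X] [MulAction G X]
    (g : G) (x : X) : ℝ :=
  ⨅ n : ℕ+, dist ((g ^ (n : ℕ)) • x) x / ((n : ℕ) : ℝ)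

/-- `g` is loxodromic for the action on `X`. -/
def IsLoxodromic {G : Type*} (X : Type*) [Group G] [MetricSpace X] [MulAction G X]
    (g : G) : Prop :=
  ∀ x : X, 0 < stableLength g x

/-- The translation length `‖g‖`. -/
def translationLength {G : Type*} (X : Type*) [Group G] [MetricSpace X] [MulAction G X]
    (g : G) : ℝ :=
  sInf (Set.range fun x : X => dist (g • x) x)

/-- The axis of `g`. -/
def axisOf {G X : Type*} [Group G] [MetricSpace X] [MulAction G X]
    (δ : ℝ) (g : G) : Set X :=
  {x : X | dist (g • x) x ≤ translationLength X g + 8 * δ}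

/-- The exponential growth rate `ω(U) = limsup (1/n) log |Uⁿ|`. -/
def growthRate {G : Type*} [Group G] (U : Set G) : ℝ :=
  limsup (fun n : ℕ => Real.log ((U ^ n).ncard : ℝ) / (n : ℝ)) atTop

/-- `S` is `α`-reduced at `p`. -/
def ReducedAt {G X : Type*} [Group G] [MetricSpace X] [MulAction G X]
    (δ α : ℝ) (S : Set G) (p : X) : Prop :=
  S ∩ S⁻¹ = ∅ ∧
  ∀ u₁ ∈ S ∪ S⁻¹, ∀ u₂ ∈ S ∪ S⁻¹, u₁ ≠ u₂ →
    gromov (u₁ • p) (u₂ • p) p <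
      min (dist (u₁ • p) p) (dist (u₂ • p) p) / 2 - α - 50 * δ

/-- A group is virtually cyclic if it has a cyclic subgroup of finite index. -/
def VirtuallyCyclic (H : Type*) [Group H] : Prop :=
  ∃ K : Subgroup H, IsCyclic K ∧ K.FiniteIndex

/-- A group is virtually nilpotent if it has a nilpotent subgroup of finite index. -/
def VirtuallyNilpotent (H : Type*) [Group H] : Prop :=
  ∃ K : Subgroup H, Group.IsNilpotent K ∧ K.FiniteIndex

/-- An `L`-local `(1,δ)`-quasi-geodesic line. -/
def IsLocalQuasiGeodesic {X : Type*} [MetricSpace X] (L δ : ℝ) (γ : ℝ → X) : Prop :=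
  ∀ s t : ℝ, |s - t| ≤ L → dist (γ s) (γ t) ≤ |s - t| ∧ |s - t| ≤ dist (γ s) (γ t) + δ

/-- `Y` is `σ`-quasi-convex. -/
def SigmaQuasiConvex {X : Type*} [MetricSpace X] (σ : ℝ) (Y : Set X) : Prop :=
  ∀ x : X, ∀ y ∈ Y, ∀ y' ∈ Y, Metric.infDist x Y ≤ gromov y y' x + σ

/-- `y` is a `δ`-projection of `x` on `Y`. -/
def IsDProj {X : Type*} [MetricSpace X] (δ : ℝ) (Y : Set X) (x y : X) : Prop :=
  y ∈ Y ∧ dist x y ≤ Metric.infDist x Y + δ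

/-- `l` is a reduced word over `U ∪ U⁻¹`. -/
def IsWordOver {G : Type*} [Group G] (U : Set G) (l : List G) : Prop :=
  (∀ a ∈ l, a ∈ U ∪ U⁻¹) ∧ l.Chain' fun a b => b ≠ a⁻¹

/-- `l` is a `τ`-shortening word over `Y` (relative to `U` and `p`). -/
def IsShorteningWord {G X : Type*} [Group G] [MetricSpace X] [MulAction G X]
    (δ τ : ℝ) (U : Set G) (p : X) (Y : Set X) (l : List G) : Prop :=
  l ≠ [] ∧ IsWordOver U l ∧
  ∃ y₀ y₁ : X, IsDProj δ Y p y₀ ∧ IsDProj δ Y (l.prod • p) y₁ ∧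
    τ < dist y₀ y₁ ∧
    (∀ a ∈ l.head?, dist p y₀ ≤ dist (a • p) p / 2 - 200 * δ) ∧
    (∀ a ∈ l.getLast?, dist (l.prod • p) y₁ ≤ dist (a • p) p / 2 - 200 * δ)

/-- `l` is a `τ`-shortening-free word relative to the family `Ys`. -/
def ShorteningFreeWord {G X : Type*} [Group G] [MetricSpace X] [MulAction G X]
    (δ τ : ℝ) (U : Set G) (p : X) (Ys : Set (Set X)) (l : List G) : Prop :=
  IsWordOver U l ∧
  ∀ Y ∈ Ys, ∀ l₀ l₁ l₂ : List G, l = l₀ ++ l₁ ++ l₂ → ¬ IsShorteningWord δ τ U p Y l₁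

/-- The word length of an element of a free group. -/
def fgNorm {α : Type*} (w : FreeGroup α) : ℕ :=
  letI := Classical.decEq α
  w.toWord.length

/-- `w` is a prefix of `r` in the free group. -/
def FGPrefix {α : Type*} (w r : FreeGroup α) : Prop :=
  fgNorm r = fgNorm w + fgNorm (w⁻¹ * r)

/-- `r'` is a cyclic permutation of `r`. -/
def IsCyclicPerm {α : Type*} (r r' : FreeGroup α) : Prop :=
  ∃ w v : FreeGroup α, r = w * v ∧ fgNorm r = fgNorm w + fgNorm v ∧
    r' = v * w ∧ fgNorm r' = fgNorm v + fgNorm w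

/-- `q` is a piece of the set of relators `R`. -/
def IsPiece {α : Type*} (R : Set (FreeGroup α)) (q : FreeGroup α) : Prop :=
  q ≠ 1 ∧ ∃ r₁ ∈ R, ∃ r₂ ∈ R, r₁ ≠ r₂ ∧ FGPrefix q r₁ ∧ FGPrefix q r₂

/-- `ξ`-uniform uniform exponential growth: every finitely generated subgroup is
either virtually nilpotent or has `ξ`-uniform exponential growth. -/
def UUEG (ξ : ℝ) (Q : Type*) [Group Q] : Prop :=
  ∀ H : Subgroup Q, H.FG →
    (VirtuallyNilpotent H ∨
      ∀ U : Set H, U.Finite → U⁻¹ = U → Subgroup.closure U = ⊤ → ξ < growthRate U)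

section

variable {G X : Type*} [Group G] [MetricSpace X] [MulAction G X]

lemma energyAt_nonneg (U : Set G) (x : X) : 0 ≤ energyAt U x :=
  Real.sSup_nonneg (by rintro _ ⟨u, -, rfl⟩; exact dist_nonneg)

lemma energy_nonneg (U : Set G) : 0 ≤ energy X U :=
  Real.sInf_nonneg (by rintro _ ⟨x, rfl⟩; exact energyAt_nonneg U x)

lemma dist_smul_le_energyAt {U : Set G} (hU : U.Finite) {u : G} (hu : u ∈ U) (x : X) :
    dist (u • x) x ≤ energyAt U x :=
  le_csSup (hU.image _).bddAbove ⟨u, hu, rfl⟩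

lemma dist_smul_le_of_mem_pow [IsIsometricSMul G X] {U : Set G} (hU : U.Finite) (x : X) (n : ℕ) :
    ∀ w ∈ U ^ n, dist (w • x) x ≤ n * energyAt U x := by
  induction n with
  | zero =>
    intro w hw
    rw [pow_zero, Set.mem_one] at hw
    simp [hw]
  | succ n ih =>
    intro w hw
    rw [pow_succ] at hw
    obtain ⟨a, ha, b, hb, rfl⟩ := Set.mem_mul.1 hw
    have h1 := dist_triangle ((a * b) • x) (a • x) x
    rw [mul_smul, dist_smul] at h1
    have h2 := ih a ha
    have h3 := dist_smul_le_energyAt hU hb x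
    rw [mul_smul]
    push_cast
    linarith

lemma dist_pow_smul_le [IsIsometricSMul G X] (h : G) (x : X) (n : ℕ) :
    dist (h ^ n • x) x ≤ n * dist (h • x) x := by
  induction n with
  | zero => simp
  | succ n ih =>
    have h1 := dist_triangle ((h ^ n) • h • x) (h ^ n • x) x
    rw [dist_smul] at h1
    rw [pow_succ, mul_smul]
    push_cast
    linarith

lemma mul_stableLength_le_dist (g : G) (x : X) (m : ℕ) :
    m * stableLength g x ≤ dist (g ^ m • x) x := by
  rcases Nat.eq_zero_or_pos m with rfl | hm
  · simp
  · have hb : BddBelow (Set.range fun n : ℕ+ =>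
        dist ((g ^ (n : ℕ)) • x) x / ((n : ℕ) : ℝ)) :=
      ⟨0, by rintro _ ⟨n, rfl⟩; positivity⟩
    have h := ciInf_le hb ⟨m, hm⟩
    have hm' : (0 : ℝ) < m := by exact_mod_cast hm
    rw [mul_comm]
    exact (le_div_iff₀ hm').1 h

/-- The stable length computed at `x` bounds displacements at every other point `y`: compare
`g ^ (m * j)` at `x` and at `y`, an error of `2 d(x, y)` which disappears on dividing by `j`. -/
lemma mul_stableLength_le_dist_of_point [IsIsometricSMul G X] (g : G) (x y : X) (m : ℕ) :
    m * stableLength g x ≤ dist (g ^ m • y) y := by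
  by_contra! hlt
  obtain ⟨j, hj⟩ := exists_nat_gt
    (2 * dist x y / (m * stableLength g x - dist (g ^ m • y) y))
  rw [div_lt_iff₀ (sub_pos.2 hlt)] at hj
  have h1 := mul_stableLength_le_dist g x (m * j)
  have h2 := dist_pow_smul_le (g ^ m) y j
  rw [← pow_mul] at h2
  have h3 := dist_triangle4 (g ^ (m * j) • x) (g ^ (m * j) • y) y x
  rw [dist_smul, dist_comm y x] at h3
  push_cast at h1
  linarith

lemma natAbs_mul_stableLength_le [IsIsometricSMul G X] (g : G) (x y : X) (k : ℤ) :
    (k.natAbs : ℝ) * stableLength g x ≤ dist (g ^ k • y) y := by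
  refine (mul_stableLength_le_dist_of_point g x y k.natAbs).trans (le_of_eq ?_)
  rcases Int.natAbs_eq k with h | h
  · conv_rhs => rw [h, zpow_natCast]
  · conv_rhs => rw [h, zpow_neg, zpow_natCast]
    rw [← dist_smul (g ^ k.natAbs) ((g ^ k.natAbs)⁻¹ • y) y, smul_inv_smul, dist_comm]

end

/-- growth of cyclic loxodromic subgroups. -/
theorem growth_cyclic_loxodromic :
    ∀ (G : Type u) [Group G] (X : Type v) [MetricSpace X] [MulAction G X],
    ∀ δ : ℝ, 0 < δ →
      IsDeltaHyperbolic X δ → IsGeodesicSpace X → IsometricAction G X →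
      ∀ U : Set G, U.Finite → U⁻¹ = U →
      ∀ g : G, IsLoxodromic X g →
      ∀ n : ℕ, 1 ≤ n →
        (U ^ n ∩ (Subgroup.zpowers g : Set G)).Finite ∧
        ∀ x : X, ((U ^ n ∩ (Subgroup.zpowers g : Set G)).ncard : ℝ) ≤
          2 * n * energy X U / stableLength g x + 1 := by
  intro G _ X _ _ δ _ _ _ hiso U hU _ g hg n hn
  have : IsIsometricSMul G X := ⟨hiso⟩
  have hfin : (U ^ n).Finite := by
    clear hn
    induction n with
    | zero => simp
    | succ n ih => rw [pow_succ]; exact ih.mul hU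
  refine ⟨hfin.inter_of_left _, fun x => ?_⟩
  have hℓ := hg x
  have hn' : (0 : ℝ) < n := by exact_mod_cast hn
  set r : ℝ := n * energy X U / stableLength g x with hr
  have hr0 : 0 ≤ r := by
    have := energy_nonneg (X := X) U
    positivity
  have hsub : U ^ n ∩ (Subgroup.zpowers g : Set G) ⊆
      (fun k : ℤ => g ^ k) '' (Finset.Icc (-(⌊r⌋₊ : ℤ)) ⌊r⌋₊ : Finset ℤ) := by
    rintro w ⟨hw, k, rfl⟩
    refine ⟨k, ?_, rfl⟩
    have hk : (k.natAbs : ℝ) * stableLength g x / n ≤ energy X U := by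
      refine le_csInf ⟨_, x, rfl⟩ ?_
      rintro _ ⟨y, rfl⟩
      rw [div_le_iff₀' hn']
      exact (natAbs_mul_stableLength_le g x y k).trans (dist_smul_le_of_mem_pow hU y n _ hw)
    rw [div_le_iff₀' hn', ← le_div_iff₀ hℓ] at hk
    have := Nat.le_floor hk
    rw [← hr] at this
    simp only [Finset.coe_Icc, Set.mem_Icc]
    omega
  have hcard : (U ^ n ∩ (Subgroup.zpowers g : Set G)).ncard ≤ 2 * ⌊r⌋₊ + 1 := by
    refine (Set.ncard_le_ncard hsub ((Finset.finite_toSet _).image _)).trans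
      ((Set.ncard_image_le (Finset.finite_toSet _)).trans ?_)
    rw [Set.ncard_coe_finset, Int.card_Icc]
    omega
  have h1 : ((U ^ n ∩ (Subgroup.zpowers g : Set G)).ncard : ℝ) ≤ 2 * (⌊r⌋₊ : ℝ) + 1 := by
    exact_mod_cast hcard
  have h2 := Nat.floor_le hr0
  have h3 : 2 * n * energy X U / stableLength g x = 2 * r := by rw [hr]; ring
  rw [h3]
  linarith
end
end

section
/- Let δ > 0 and α ≥ 3δ. Let G be a group acting by isometries on a δ-hyperbolic geodesic metric space X, and let U ⊆ G be a finite subset that is α-reduced at a point p ∈ X. Let n ≥ 2 and let w ≡ u₁⋯u_n be a reduced word over U ∪ U⁻¹, and set x₀ = p and xᵢ = u₁⋯uᵢp for 1 ≤ i ≤ n. Then: (i) for every i ∈ {1,…,n−2}, (x_{i−1},x_{i+1})_{x_i} + (x_i,x_{i+2})_{x_{i+1}} < d(x_i,x_{i+1}) − 2(α+50δ); (ii) d(wp,p) ≥ (1/2)·d(u₁p,p) + (1/2)·d(u_np,p) + 2(n−1)(α+40δ) + 4(n−1)δ; (iii) for every i ∈ {1,…,n−2}, (p,wp)_{x_i}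 ≤ (uᵢ⁻¹p, u_{i+1}p)_p + 2δ. -/
/-!
Write `gᵢ = (x_{i-1}, x_{i+1})_{x_i}` for the angle terms of the broken geodesic
`x₀, …, x_n` and `aᵢ = d(x_{i-1}, x_i)` for its side lengths. By invariance of the Gromov
product under isometries, `gᵢ = (uᵢ⁻¹p, u_{i+1}p)_p` and `aᵢ = d(uᵢp, p)`, so that `α`-reducedness
gives `gᵢ < min(aᵢ, a_{i+1})/2 - α - 50δ`. Adding two consecutive such bounds gives (i).

The engine is `gromov_le_of_far`: if `(y, z)_t` exceeds `(x, z)_t + δ`, i.e. `z` and `y` are seen from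
`t` in almost the same direction, then `z` may be replaced by `y` in `(x, z)_t` at the cost of `δ`.
Each side is much longer than the sum of its two angle terms, so an induction from the left gives
`(x₀, x_{i+1})_{x_i} ≤ gᵢ + δ` (`gromov_start_le`), and one from the right gives
`(x_{i-1}, x_n)_{x_i} ≤ gᵢ + δ` (`gromov_end_le`). Combining both yields (iii). For (ii), the identity
`d(x₀, x_{i+1}) = d(x₀, x_i) + a_{i+1} - 2 (x₀, x_{i+1})_{x_i}` shows that each step gains at least
`(a_{i+1} - aᵢ)/2 + 2α + 98δ`, and these gains telescope.
-/

open Pointwise Filter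

noncomputable section

universe u v

section BrokenGeodesic

variable {X : Type*} [MetricSpace X]

theorem gromov_symm (x y t : X) : gromov x y t = gromov y x t := by
  simp only [gromov, dist_comm x y]; ring

/-- The two Gromov products based at the ends of a side `[s, t]` add up to its length. -/
theorem gromov_add_gromov (x s t : X) : gromov x t s + gromov x s t = dist s t := by
  simp only [gromov, dist_comm t s]; ring

/-- Replacing the endpoint `z` by `y` costs at most `δ`, provided that `y` and `z` fellow-travel
beyond `(x, z)_t + δ` when seen from `t`. -/
theorem gromov_le_of_far {δ : ℝ} (hyp : IsDeltaHyperbolic X δ) {x y z t : X} {c : ℝ}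
    (h : gromov x z t ≤ c) (hfar : c + δ < gromov y z t) : gromov x y t ≤ c + δ := by
  have h1 := hyp x y z t
  rcases min_choice (gromov x y t) (gromov y z t) with h2 | h2 <;> rw [h2] at h1 <;> linarith

/-- Every angle term of `x 0, …, x n` is smaller than half of each adjacent side
minus a margin `β`. -/
def SmallAngles (β : ℝ) (n : ℕ) (x : ℕ → X) : Prop :=
  ∀ j, j + 2 ≤ n →
    gromov (x j) (x (j + 2)) (x (j + 1)) < dist (x j) (x (j + 1)) / 2 - β ∧
    gromov (x j) (x (j + 2)) (x (j + 1)) < dist (x (j + 1)) (x (j + 2)) / 2 - β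

variable {δ β : ℝ} {n : ℕ} {x : ℕ → X}

theorem gromov_start_le (hδ : 0 < δ) (hβ : 2 * δ ≤ β) (hyp : IsDeltaHyperbolic X δ)
    (hx : SmallAngles β n x) (j : ℕ) (hj : j + 2 ≤ n) :
    gromov (x 0) (x (j + 2)) (x (j + 1)) ≤ gromov (x j) (x (j + 2)) (x (j + 1)) + δ := by
  induction j with
  | zero => simp only [zero_add]; linarith
  | succ j ih =>
    have h1 := ih (by omega)
    have h2 := (hx j (by omega)).2
    have h3 := (hx (j + 1) hj).1
    have h4 := gromov_add_gromov (x 0) (x (j + 1)) (x (j + 2))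
    rw [gromov_symm]
    refine gromov_le_of_far hyp (z := x (j + 1)) (gromov_symm _ _ _).le ?_
    simp only [add_assoc, Nat.reduceAdd] at *
    linarith

theorem gromov_end_le (hδ : 0 < δ) (hβ : 2 * δ ≤ β) (hyp : IsDeltaHyperbolic X δ)
    (hx : SmallAngles β n x) (k j : ℕ) (hj : j + 2 + k = n) :
    gromov (x j) (x n) (x (j + 1)) ≤ gromov (x j) (x (j + 2)) (x (j + 1)) + δ := by
  induction k generalizing j with
  | zero => subst hj; simp only [add_zero]; linarith
  | succ k ih =>
    have h1 := ih (j + 1) (by omega)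
    have h2 := (hx j (by omega)).2
    have h3 := (hx (j + 1) (by omega)).1
    have h4 := gromov_add_gromov (x n) (x (j + 1)) (x (j + 2))
    rw [gromov_symm (x n) (x (j + 1))] at h4
    refine gromov_le_of_far hyp (z := x (j + 2)) le_rfl ?_
    simp only [add_assoc, Nat.reduceAdd] at *
    linarith

theorem gromov_start_end_le (hδ : 0 < δ) (hβ : 2 * δ ≤ β) (hyp : IsDeltaHyperbolic X δ)
    (hx : SmallAngles β n x) (j : ℕ) (hj : j + 3 ≤ n) :
    gromov (x 0) (x n) (x (j + 1)) ≤ gromov (x j) (x (j + 2)) (x (j + 1)) + 2 * δ := by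
  have h0 := gromov_start_le hδ hβ hyp hx j (by omega)
  have h1 := gromov_end_le hδ hβ hyp hx (n - (j + 3)) (j + 1) (by omega)
  have h2 := (hx j (by omega)).2
  have h3 := (hx (j + 1) (by omega)).1
  have h4 := gromov_add_gromov (x n) (x (j + 1)) (x (j + 2))
  rw [gromov_symm (x n) (x (j + 1))] at h4
  simp only [add_assoc, Nat.reduceAdd] at *
  have h5 := gromov_le_of_far hyp (y := x n) h0 (by linarith)
  linarith

theorem dist_start_ge (hδ : 0 < δ) (hβ : 2 * δ ≤ β) (hyp : IsDeltaHyperbolic X δ)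
    (hx : SmallAngles β n x) (j : ℕ) (hj : j + 1 ≤ n) :
    dist (x 0) (x 1) / 2 + dist (x j) (x (j + 1)) / 2 + 2 * j * (β - δ) ≤
      dist (x 0) (x (j + 1)) := by
  induction j with
  | zero => simp
  | succ j ih =>
    have h1 := ih (by omega)
    have h2 := gromov_start_le hδ hβ hyp hx j hj
    obtain ⟨h3, h4⟩ := hx j hj
    have h5 : gromov (x 0) (x (j + 2)) (x (j + 1)) =
      (dist (x 0) (x (j + 1)) + dist (x (j + 1)) (x (j + 2)) - dist (x 0) (x (j + 2))) / 2 := by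
      rw [gromov, dist_comm (x (j + 2)) (x (j + 1))]
    simp only [add_assoc, Nat.reduceAdd] at *
    push_cast
    linarith

end BrokenGeodesic

/-- broken geodesics from reduced subsets
(letters are `u 1, …, u n`; `x i = u 1 ⋯ u i • p`). -/
theorem broken_geodesic_reduced :
    ∀ (G : Type u) [Group G] (X : Type v) [MetricSpace X] [MulAction G X],
    ∀ δ α : ℝ, 0 < δ → 3 * δ ≤ α →
      IsDeltaHyperbolic X δ → IsGeodesicSpace X → IsometricAction G X →
      ∀ (U : Set G) (p : X), U.Finite → ReducedAt δ α U p →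
      ∀ (n : ℕ) (uu : ℕ → G), 2 ≤ n →
        (∀ i, 1 ≤ i → i ≤ n → uu i ∈ U ∪ U⁻¹) →
        (∀ i, 1 ≤ i → i + 1 ≤ n → uu (i + 1) ≠ (uu i)⁻¹) →
        ∀ x : ℕ → X,
          (∀ i, x i = (((List.range i).map fun j => uu (j + 1)).prod) • p) →
          ((∀ j, j + 3 ≤ n →
              gromov (x j) (x (j + 2)) (x (j + 1)) +
                gromov (x (j + 1)) (x (j + 3)) (x (j + 2)) <
              dist (x (j + 1)) (x (j + 2)) - 2 * (α + 50 * δ)) ∧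
           (dist (uu 1 • p) p / 2 + dist (uu n • p) p / 2 +
              2 * ((n : ℝ) - 1) * (α + 40 * δ) + 4 * ((n : ℝ) - 1) * δ ≤
              dist (x n) p) ∧
           (∀ j, j + 3 ≤ n →
              gromov p (x n) (x (j + 1)) ≤
                gromov ((uu (j + 1))⁻¹ • p) (uu (j + 2) • p) p + 2 * δ)) := by
  intro G _ X _ _ δ α hδ hα hyp _ hiso U p _ hU n uu hn hmem hred x hx
  have hdist (g : G) (y z : X) : dist (g • y) (g • z) = dist y z := (hiso g).dist_eq y z
  have hinv (i : ℕ) (h : uu i ∈ U ∪ U⁻¹) : (uu i)⁻¹ ∈ U ∪ U⁻¹ := by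
    simpa [or_comm] using h
  have hlen (g : G) : dist (g⁻¹ • p) p = dist (g • p) p := by
    rw [← hdist g, smul_inv_smul, dist_comm]
  have hx0 : x 0 = p := by simp [hx]
  have hsucc (j : ℕ) : ∃ g : G, x j = g • p ∧ x (j + 1) = (g * uu (j + 1)) • p ∧
      x (j + 2) = (g * uu (j + 1) * uu (j + 2)) • p :=
    ⟨_, hx j, by rw [hx, List.range_succ]; simp,
      by rw [hx, List.range_succ, List.range_succ]; simp [mul_assoc]⟩
  have hside (j : ℕ) : dist (x j) (x (j + 1)) = dist (uu (j + 1) • p) p := by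
    obtain ⟨g, h0, h1, -⟩ := hsucc j
    rw [h0, h1, mul_smul, hdist, dist_comm]
  have hangle (j : ℕ) : gromov (x j) (x (j + 2)) (x (j + 1)) =
      gromov ((uu (j + 1))⁻¹ • p) (uu (j + 2) • p) p := by
    obtain ⟨g, h0, h1, h2⟩ := hsucc j
    have h0' : x j = (g * uu (j + 1)) • (uu (j + 1))⁻¹ • p := by
      rw [h0, mul_smul, smul_inv_smul]
    rw [mul_smul _ (uu (j + 2))] at h2
    simp only [gromov, h0', h1, h2, hdist]
  have hsmall : SmallAngles (α + 50 * δ) n x := by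
    intro j hj
    have h := hU.2 _ (hinv (j + 1) (hmem _ (by omega) (by omega))) _
      (hmem (j + 2) (by omega) hj) (hred (j + 1) (by omega) hj).symm
    rw [hangle, hside, hside (j + 1)]
    rw [hlen] at h
    have h1 := min_le_left (dist (uu (j + 1) • p) p) (dist (uu (j + 2) • p) p)
    have h2 := min_le_right (dist (uu (j + 1) • p) p) (dist (uu (j + 2) • p) p)
    simp only [add_assoc, Nat.reduceAdd] at *
    constructor <;> linarith
  have hβ : 2 * δ ≤ α + 50 * δ := by linarith
  refine ⟨fun j hj => ?_, ?_, fun j hj => ?_⟩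
  · have h1 := (hsmall j (by omega)).2
    have h2 := (hsmall (j + 1) hj).1
    simp only [add_assoc, Nat.reduceAdd] at *
    linarith
  · obtain ⟨m, rfl⟩ : ∃ m, n = m + 1 := ⟨n - 1, by omega⟩
    have h := dist_start_ge hδ hβ hyp hsmall m le_rfl
    rw [hside m, hside 0, hx0, dist_comm p] at h
    have hm : 0 ≤ (m : ℝ) * δ := by positivity
    push_cast
    simp only [zero_add] at h
    linarith
  · rw [← hangle, ← hx0]
    exact gromov_start_end_le hδ hβ hyp hsmall j hj
end
end
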